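/- Let n ≥ 2 be a positive integer and let d be a divisor of n. For each prime p dividing n, let α_p be the exponent of p in n and β_p the exponent of p in d (so 0 ≤ β_p ≤ α_p and α_p ≥ 1). Then ∑_{k|n} c_d(k) = ∏_{p prime, p|n} ((α_p - β_p + 1)·φ(p^{β_p}) - e_p), where e_p = 0 if β_p = 0 and e_p = p^{β_p - 1} if β_p ≥ 1. -/

import Mathlib

/-- The Ramanujan sum `c_d(r)`: the sum of the `r`-th powers of all primitive
`d`-th roots of unity. -/
noncomputable def ramanujanSum (d r : ℕ) : ℂ :=
  ∑ m ∈ (Finset.range d).filter (fun m => Nat.gcd m d = 1),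
    Complex.exp (2 * Real.pi * Complex.I * ((m : ℂ) * (r : ℂ) / (d : ℂ)))

/-!
Since every `n`-th root of unity is a primitive `d`-th root for exactly one `d ∣ n`, summing
`c_d(r)` over `d ∣ n` gives `n` if `n ∣ r` and `0` otherwise. Möbius inversion then makes
`d ↦ c_d(r)` multiplicative, and differencing at prime powers shows that `c_{p^b}(r)` depends on `r`
only through the exponent `v_p(r)`. Hence `c_d(k) = ∏_{p ∣ n} c_{p^{β_p}}(p^{v_p(k)})`, and as `k`
runs over the divisors of `n` the exponents `v_p(k)` run independently over `0, …, α_p`, so the sum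
over `k` factors into prime-power sums.
-/

open ArithmeticFunction Finset Polynomial

section SumOverDivisors

variable {R : Type*} [CommSemiring R]

lemma prod_sum_eq_sum_finsupp {ι κ : Type*} [Zero κ] (s : Finset ι)
    (t : ι → Finset κ) (g : ι → κ → R) :
    ∏ i ∈ s, ∑ j ∈ t i, g i j = ∑ f ∈ s.finsupp t, ∏ i ∈ s, g i (f i) := by
  classical
  rw [prod_sum, Finset.finsupp, sum_map]
  refine sum_congr rfl fun f _ => ?_
  rw [← prod_attach s]
  exact prod_congr rfl fun i _ => by simp [Finsupp.indicator_of_mem i.2]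

lemma sum_divisors_prod_factorization {n : ℕ} (hn : n ≠ 0) (g : ℕ → ℕ → R) :
    ∑ k ∈ n.divisors, ∏ p ∈ n.primeFactors, g p (k.factorization p) =
      ∏ p ∈ n.primeFactors, ∑ j ∈ range (n.factorization p + 1), g p j := by
  have mem_exponents_iff (f : ℕ →₀ ℕ) :
      f ∈ n.primeFactors.finsupp (fun p => range (n.factorization p + 1)) ↔
        f ≤ n.factorization := by
    simp only [mem_finsupp_iff, mem_range, Nat.lt_succ_iff]
    exact ⟨fun hf => (Finsupp.le_iff _ _).2 fun p hp => hf.2 p (hf.1 hp),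
      fun hf => ⟨Finsupp.support_mono hf, fun p _ => hf p⟩⟩
  rw [prod_sum_eq_sum_finsupp]
  refine sum_bij' (fun k _ => k.factorization) (fun f _ => f.prod (· ^ ·))
    (fun k hk => ?_) (fun f hf => ?_) (fun k hk => ?_) (fun f hf => ?_) (fun _ _ => rfl)
  · rw [mem_exponents_iff, Nat.factorization_le_iff_dvd (Nat.pos_of_mem_divisors hk).ne' hn]
    exact Nat.dvd_of_mem_divisors hk
  · exact Nat.mem_divisors.2
      ⟨Nat.prod_pow_dvd_of_le_factorization ((mem_exponents_iff f).1 hf), hn⟩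
  · exact Nat.prod_factorization_pow_eq_self (Nat.pos_of_mem_divisors hk).ne'
  · exact Nat.factorization_prod_pow_eq_self_of_le_factorization ((mem_exponents_iff f).1 hf)

end SumOverDivisors

lemma sum_range_ite_le {R : Type*} [Ring R] {b n : ℕ} (hb : b ≤ n) (x : R) :
    ∑ j ∈ range n, (if b ≤ j then x else 0) = ((n : R) - b) * x := by
  have filter_eq_Ico : (range n).filter (b ≤ ·) = Ico b n := by grind
  rw [← sum_filter, filter_eq_Ico, sum_const, Nat.card_Ico, nsmul_eq_mul, Nat.cast_sub hb]

lemma isMultiplicative_of_mul_zeta {R : Type*} [CommRing R] {f : ArithmeticFunction R}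
    (hf : (f * (zeta : ArithmeticFunction R)).IsMultiplicative) : f.IsMultiplicative := by
  rw [← mul_one f, ← coe_zeta_mul_coe_moebius, ← mul_assoc]
  exact hf.mul isMultiplicative_moebius.intCast

section RootsOfUnity

variable {R : Type*} [CommRing R] [IsDomain R] {w : R} {n : ℕ} (hw : IsPrimitiveRoot w n)
include hw

lemma nthRootsFinset_one_eq_image_pow [DecidableEq R] :
    nthRootsFinset n (1 : R) = (range n).image (w ^ ·) := by
  simp only [nthRootsFinset_def, hw.nthRoots_eq (one_pow n), mul_one, Finset.image, range_val]

lemma sum_nthRootsFinset_one_pow (r : ℕ) :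
    ∑ z ∈ nthRootsFinset n (1 : R), z ^ r = if n ∣ r then (n : R) else 0 := by
  have sum_eq_geom_sum :
      ∑ z ∈ nthRootsFinset n (1 : R), z ^ r = ∑ i ∈ range n, (w ^ r) ^ i := by
    classical
    have pow_injOn : Set.InjOn (w ^ ·) (range n : Set ℕ) := fun i hi j hj =>
      hw.pow_inj (mem_range.1 hi) (mem_range.1 hj)
    rw [nthRootsFinset_one_eq_image_pow hw, sum_image pow_injOn]
    exact sum_congr rfl fun i _ => pow_right_comm w i r
  rw [sum_eq_geom_sum]
  split_ifs with h
  · simp [(hw.pow_eq_one_iff_dvd r).2 h]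
  · have pow_ne_one : w ^ r ≠ 1 := mt (hw.pow_eq_one_iff_dvd r).1 h
    refine eq_zero_of_ne_zero_of_mul_right_eq_zero (sub_ne_zero.2 pow_ne_one) ?_
    rw [geom_sum_mul, pow_right_comm, hw.pow_eq_one, one_pow, sub_self]

end RootsOfUnity

lemma ramanujanSum_eq_sum_primitiveRoots (d r : ℕ) :
    ramanujanSum d r = ∑ z ∈ primitiveRoots d ℂ, z ^ r := by
  rcases d.eq_zero_or_pos with rfl | hd
  · simp [ramanujanSum]
  set w := Complex.exp (2 * Real.pi * Complex.I / d)
  have hw : IsPrimitiveRoot w d := Complex.isPrimitiveRoot_exp d hd.ne'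
  have : NeZero d := ⟨hd.ne'⟩
  refine sum_bij (fun m _ => w ^ m) (fun m hm => ?_) (fun i hi j hj => ?_) (fun z hz => ?_)
    (fun m _ => ?_)
  · rw [mem_primitiveRoots hd]
    exact hw.pow_of_coprime m (mem_filter.1 hm).2
  · simp only [mem_filter, mem_range] at hi hj
    exact hw.pow_inj hi.1 hj.1
  · obtain ⟨m, hm, hmd, rfl⟩ := hw.isPrimitiveRoot_iff.1 ((mem_primitiveRoots hd).1 hz)
    exact ⟨m, mem_filter.2 ⟨mem_range.2 hm, hmd⟩, rfl⟩
  · rw [← pow_mul, ← Complex.exp_nat_mul]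
    push_cast
    ring_nf

lemma sum_divisors_ramanujanSum (n r : ℕ) :
    ∑ d ∈ n.divisors, ramanujanSum d r = if n ∣ r then (n : ℂ) else 0 := by
  rcases eq_or_ne n 0 with rfl | hn
  · simp
  calc ∑ d ∈ n.divisors, ramanujanSum d r
      = ∑ d ∈ n.divisors, ∑ z ∈ primitiveRoots d ℂ, z ^ r :=
        sum_congr rfl fun d _ => ramanujanSum_eq_sum_primitiveRoots d r
    _ = ∑ z ∈ nthRootsFinset n (1 : ℂ), z ^ r := by
        rw [IsPrimitiveRoot.nthRoots_one_eq_biUnion_primitiveRoots,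
          sum_biUnion fun _ _ _ _ => IsPrimitiveRoot.disjoint]
    _ = if n ∣ r then (n : ℂ) else 0 :=
        sum_nthRootsFinset_one_pow (Complex.isPrimitiveRoot_exp n hn) r

/-- The function `d ↦ c_d(r)`, bundled as an arithmetic function so that Möbius inversion
applies to it. -/
noncomputable def ramanujanArithmeticFunction (r : ℕ) : ArithmeticFunction ℂ :=
  ⟨fun d => ramanujanSum d r, by simp [ramanujanSum]⟩

lemma isMultiplicative_ramanujanArithmeticFunction (r : ℕ) :
    (ramanujanArithmeticFunction r).IsMultiplicative := by
  refine isMultiplicative_of_mul_zeta ?_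
  have mul_zeta_apply (n : ℕ) :
      (ramanujanArithmeticFunction r * (zeta : ArithmeticFunction ℂ)) n =
        if n ∣ r then (n : ℂ) else 0 := by
    rw [coe_mul_zeta_apply]
    exact sum_divisors_ramanujanSum n r
  refine ⟨by simp [mul_zeta_apply], fun {m n} hmn => ?_⟩
  have mul_dvd_iff : m * n ∣ r ↔ m ∣ r ∧ n ∣ r :=
    ⟨fun h => ⟨dvd_of_mul_right_dvd h, dvd_of_mul_left_dvd h⟩,
      fun h => hmn.mul_dvd_of_dvd_of_dvd h.1 h.2⟩
  simp only [mul_zeta_apply, mul_dvd_iff, ite_and, Nat.cast_mul, ite_zero_mul_ite_zero]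

lemma ramanujanSum_one (r : ℕ) : ramanujanSum 1 r = 1 :=
  (isMultiplicative_ramanujanArithmeticFunction r).map_one

lemma ramanujanSum_eq_prod_prime_pow {d : ℕ} (hd : d ≠ 0) {s : Finset ℕ}
    (hs : d.primeFactors ⊆ s) (r : ℕ) :
    ramanujanSum d r = ∏ p ∈ s, ramanujanSum (p ^ d.factorization p) r :=
  calc ramanujanSum d r
      = d.factorization.prod fun p b => ramanujanSum (p ^ b) r :=
        (isMultiplicative_ramanujanArithmeticFunction r).multiplicative_factorization _ hd
    _ = ∏ p ∈ s, ramanujanSum (p ^ d.factorization p) r :=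
        Finsupp.prod_of_support_subset _ hs _ fun p _ => by rw [pow_zero, ramanujanSum_one]

section PrimePower

variable {p : ℕ} (hp : p.Prime)
include hp

lemma ramanujanSum_prime_pow_succ (b r : ℕ) :
    ramanujanSum (p ^ (b + 1)) r =
      (if p ^ (b + 1) ∣ r then (p : ℂ) ^ (b + 1) else 0) -
        (if p ^ b ∣ r then (p : ℂ) ^ b else 0) := by
  have sum_succ : ∑ d ∈ (p ^ b).divisors, ramanujanSum d r + ramanujanSum (p ^ (b + 1)) r =
      ∑ d ∈ (p ^ (b + 1)).divisors, ramanujanSum d r := by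
    simp only [Nat.sum_divisors_prime_pow hp, sum_range_succ _ (b + 1)]
  simp only [sum_divisors_ramanujanSum, Nat.cast_pow] at sum_succ
  exact eq_sub_of_add_eq' sum_succ

lemma ramanujanSum_prime_pow_eq_ordProj (b : ℕ) {r : ℕ} (hr : r ≠ 0) :
    ramanujanSum (p ^ b) r = ramanujanSum (p ^ b) (p ^ r.factorization p) := by
  cases b with
  | zero => simp only [pow_zero, ramanujanSum_one]
  | succ b => simp only [ramanujanSum_prime_pow_succ hp, ← hp.pow_dvd_iff_dvd_ordProj hr]

lemma sum_ramanujanSum_prime_pow {a b : ℕ} (hb : b ≤ a) :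
    ∑ j ∈ range (a + 1), ramanujanSum (p ^ b) (p ^ j) =
      ((a : ℂ) - b + 1) * (p ^ b).totient - if b = 0 then 0 else (p : ℂ) ^ (b - 1) := by
  cases b with
  | zero => simp [ramanujanSum_one]
  | succ b =>
    calc ∑ j ∈ range (a + 1), ramanujanSum (p ^ (b + 1)) (p ^ j)
        = ((a + 1 : ℕ) - (b + 1 : ℕ)) * (p : ℂ) ^ (b + 1) - ((a + 1 : ℕ) - b) * (p : ℂ) ^ b := by
          simp only [ramanujanSum_prime_pow_succ hp, Nat.pow_dvd_pow_iff_le_right hp.one_lt,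
            sum_sub_distrib]
          rw [sum_range_ite_le (by omega), sum_range_ite_le (by omega)]
      _ = ((a : ℂ) - (b + 1 : ℕ) + 1) * (p ^ (b + 1)).totient - (p : ℂ) ^ b := by
          rw [Nat.totient_prime_pow_succ hp]
          push_cast [hp.one_le]
          ring
      _ = _ := by simp

end PrimePower

theorem stmt_10 (n : ℕ) (hn : 2 ≤ n) (d : ℕ) (hd : d ∣ n) :
    ∑ k ∈ n.divisors, ramanujanSum d k =
      ∏ p ∈ n.primeFactors,
        (((n.factorization p : ℂ) - (d.factorization p : ℂ) + 1) *
            (Nat.totient (p ^ d.factorization p) : ℂ) -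
          (if d.factorization p = 0 then 0 else (p : ℂ) ^ (d.factorization p - 1))) := by
  have hn₀ : n ≠ 0 := by omega
  have hd₀ : d ≠ 0 := ne_zero_of_dvd_ne_zero hn₀ hd
  calc ∑ k ∈ n.divisors, ramanujanSum d k
      = ∑ k ∈ n.divisors, ∏ p ∈ n.primeFactors,
          ramanujanSum (p ^ d.factorization p) (p ^ k.factorization p) := by
        refine sum_congr rfl fun k hk => ?_
        rw [ramanujanSum_eq_prod_prime_pow hd₀ (Nat.primeFactors_mono hd hn₀)]
        exact prod_congr rfl fun p hp => ramanujanSum_prime_pow_eq_ordProj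
          (Nat.prime_of_mem_primeFactors hp) _ (Nat.pos_of_mem_divisors hk).ne'
    _ = ∏ p ∈ n.primeFactors, ∑ j ∈ range (n.factorization p + 1),
          ramanujanSum (p ^ d.factorization p) (p ^ j) :=
        sum_divisors_prod_factorization hn₀ fun p j => ramanujanSum (p ^ d.factorization p) (p ^ j)
    _ = _ := prod_congr rfl fun p hp => sum_ramanujanSum_prime_pow
        (Nat.prime_of_mem_primeFactors hp) ((Nat.factorization_le_iff_dvd hd₀ hn₀).2 hd p)
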